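/- Let 0 < s, t with s + t ≤ 1 and let Φ : M_m(ℂ) → M_n(ℂ) be a semiunital Schwarz map (i.e. Φ†(I) = (n/m) I). Then for all positive semidefinite X, Y ∈ M_n(ℂ) and all K ∈ M_m(ℂ): tr[Φ(K)* X^s Φ(K) Y^t] ≤ (n/m)^{1-(s+t)} tr[K* Φ†(X)^s K Φ†(Y)^t]. -/

import Mathlib

open Matrix
open scoped ComplexOrder

/-- Real power of a matrix, defined spectrally for Hermitian matrices (junk value `0` otherwise). -/
noncomputable def mpow {k : ℕ} (A : Matrix (Fin k) (Fin k) ℂ) (p : ℝ) : Matrix (Fin k) (Fin k) ℂ :=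
  if hA : A.IsHermitian then
    (hA.eigenvectorUnitary : Matrix (Fin k) (Fin k) ℂ) *
      Matrix.diagonal (fun i => ((hA.eigenvalues i ^ p : ℝ) : ℂ)) *
      (hA.eigenvectorUnitary : Matrix (Fin k) (Fin k) ℂ)ᴴ
  else 0

/-- A Schwarz map: `Φ(K*K) ≥ Φ(K)*Φ(K)` for all `K`. -/
def IsSchwarz {a b : ℕ} (Φ : Matrix (Fin a) (Fin a) ℂ →ₗ[ℂ] Matrix (Fin b) (Fin b) ℂ) : Prop :=
  ∀ K, (Φ (Kᴴ * K) - (Φ K)ᴴ * Φ K).PosSemidef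

/-- A positive map: sends positive semidefinite matrices to positive semidefinite matrices. -/
def IsPositiveMap {a b : ℕ} (Φ : Matrix (Fin a) (Fin a) ℂ →ₗ[ℂ] Matrix (Fin b) (Fin b) ℂ) : Prop :=
  ∀ X, X.PosSemidef → (Φ X).PosSemidef

/-- `Ψ` is the Hilbert–Schmidt adjoint of `Φ`: `⟨X, Φ Y⟩ = ⟨Ψ X, Y⟩`. -/
def IsHSAdjoint {a b : ℕ} (Φ : Matrix (Fin a) (Fin a) ℂ →ₗ[ℂ] Matrix (Fin b) (Fin b) ℂ)
    (Ψ : Matrix (Fin b) (Fin b) ℂ →ₗ[ℂ] Matrix (Fin a) (Fin a) ℂ) : Prop :=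
  ∀ X Y, (Xᴴ * Φ Y).trace = ((Ψ X)ᴴ * Y).trace

/-!
In the eigenbases of `X`, `Y` and of `Ψ X`, `Ψ Y`, the inequality says that `Φ` is a contraction
from the weighted space `ℓ²(c ^ (1 - s - t) * x'ᵢ ^ s * y'ⱼ ^ t)` to the weighted space
`ℓ²(xᵢ ^ s * yⱼ ^ t)`. The pairs of weights between which a fixed additive map contracts are closed
under parallel sums. Since `x ^ s * y ^ (1 - s)` is proportional to the integral of
`r ^ (s - 2) * (x : r * y)` over `r > 0`, they are closed under weighted geometric means as well, so
the exponents `(s, t, 1 - s - t)` for which the contraction holds form a convex set. It remains to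
check the three vertices of the simplex, where the inequality is the Schwarz inequality for `K*`
paired with `X`, for `K` paired with `Y`, and for `K` paired with `1`, the last combined with
`Ψ 1 ≤ c`.
-/

section WeightedInterpolation

open MeasureTheory Set

/-- The parallel sum `x : y = xy / (x + y)` of nonnegative reals, i.e. the minimum of
`x * ‖a‖ ^ 2 + y * ‖b‖ ^ 2` over all splittings `a + b` of a unit vector; it is `0` when
`x = y = 0`. -/
noncomputable def parallelSum (x y : ℝ) : ℝ :=
  x * y / (x + y)

lemma parallelSum_mul_norm_add_sq_le {G : Type*} [SeminormedAddCommGroup G] {x y : ℝ}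
    (hx : 0 ≤ x) (hy : 0 ≤ y) (a b : G) :
    parallelSum x y * ‖a + b‖ ^ 2 ≤ x * ‖a‖ ^ 2 + y * ‖b‖ ^ 2 := by
  rcases (add_nonneg hx hy).eq_or_lt with h | h
  · simp only [parallelSum, ← h, div_zero, zero_mul]
    positivity
  · have triangle : ‖a + b‖ ^ 2 ≤ (‖a‖ + ‖b‖) ^ 2 := by gcongr; exact norm_add_le a b
    rw [parallelSum, div_mul_eq_mul_div, div_le_iff₀ h]
    nlinarith [mul_le_mul_of_nonneg_left triangle (mul_nonneg hx hy),
      sq_nonneg (x * ‖a‖ - y * ‖b‖)]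

lemma mul_sq_add_mul_sq_eq_parallelSum {x y : ℝ} (hx : 0 ≤ x) (hy : 0 ≤ y) :
    x * (y / (x + y)) ^ 2 + y * (1 - y / (x + y)) ^ 2 = parallelSum x y := by
  rw [parallelSum]
  rcases (add_nonneg hx hy).eq_or_lt with h | h
  · obtain ⟨rfl, rfl⟩ := (add_eq_zero_iff_of_nonneg hx hy).1 h.symm
    simp
  · field_simp
    ring

lemma mul_rpowIntegrand₀₁_eqOn_parallelSum {s x y : ℝ} (hs : s ∈ Ioo 0 1) (hx : 0 ≤ x)
    (hy : 0 ≤ y) :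
    EqOn (fun t ↦ y * Real.rpowIntegrand₀₁ s t (x / y))
      (fun t ↦ t ^ (s - 2) * parallelSum x (t * y)) (Ioi 0) := by
  intro t (ht : 0 < t)
  rcases hy.eq_or_lt with rfl | hy
  · simp [parallelSum]
  · have shift : t ^ (s - 1) = t ^ (s - 2) * t := by
      rw [← Real.rpow_add_one ht.ne']
      ring_nf
    simp only [parallelSum, Real.rpowIntegrand₀₁_eq_pow_div hs ht.le (div_nonneg hx hy.le), shift]
    field_simp
    ring

lemma integrableOn_rpow_mul_parallelSum {s x y : ℝ} (hs : s ∈ Ioo 0 1) (hx : 0 ≤ x)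
    (hy : 0 ≤ y) : IntegrableOn (fun t ↦ t ^ (s - 2) * parallelSum x (t * y)) (Ioi 0) :=
  IntegrableOn.congr_fun
    ((Real.integrableOn_rpowIntegrand₀₁_Ioi hs (div_nonneg hx hy)).const_mul y)
    (mul_rpowIntegrand₀₁_eqOn_parallelSum hs hx hy) measurableSet_Ioi

lemma integral_rpow_mul_parallelSum {s x y : ℝ} (hs : s ∈ Ioo 0 1) (hx : 0 ≤ x) (hy : 0 ≤ y) :
    ∫ t in Ioi 0, t ^ (s - 2) * parallelSum x (t * y) =
      x ^ s * y ^ (1 - s) * ∫ t in Ioi 0, Real.rpowIntegrand₀₁ s t 1 := by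
  have scale : y * (x / y) ^ s = x ^ s * y ^ (1 - s) := by
    rcases hy.eq_or_lt with rfl | hy
    · simp [Real.zero_rpow (sub_pos.2 hs.2).ne']
    · rw [Real.div_rpow hx hy.le, Real.rpow_sub hy, Real.rpow_one]
      field_simp
  rw [← setIntegral_congr_fun measurableSet_Ioi (mul_rpowIntegrand₀₁_eqOn_parallelSum hs hx hy),
    integral_const_mul, Real.integral_rpowIntegrand₀₁_eq_rpow_mul_const hs (div_nonneg hx hy),
    ← mul_assoc, scale]

section Sum

variable {ι : Type*} [Fintype ι] {x y : ι → ℝ} {s : ℝ}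

lemma integrableOn_rpow_mul_sum_parallelSum (hs : s ∈ Ioo 0 1) (hx : 0 ≤ x) (hy : 0 ≤ y)
    (q : ι → ℝ) :
    IntegrableOn (fun t ↦ t ^ (s - 2) * ∑ i, parallelSum (x i) (t * y i) * q i) (Ioi 0) := by
  simp only [Finset.mul_sum, ← mul_assoc]
  exact integrable_finsetSum _ fun i _ ↦
    (integrableOn_rpow_mul_parallelSum hs (hx i) (hy i)).mul_const _

lemma integral_rpow_mul_sum_parallelSum (hs : s ∈ Ioo 0 1) (hx : 0 ≤ x) (hy : 0 ≤ y)
    (q : ι → ℝ) :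
    ∫ t in Ioi 0, t ^ (s - 2) * ∑ i, parallelSum (x i) (t * y i) * q i =
      (∑ i, x i ^ s * y i ^ (1 - s) * q i) * ∫ t in Ioi 0, Real.rpowIntegrand₀₁ s t 1 := by
  simp only [Finset.mul_sum, Finset.sum_mul, ← mul_assoc]
  rw [integral_finsetSum _ fun i _ ↦
    (integrableOn_rpow_mul_parallelSum hs (hx i) (hy i)).mul_const _]
  refine Finset.sum_congr rfl fun i _ ↦ ?_
  rw [integral_mul_const, integral_rpow_mul_parallelSum hs (hx i) (hy i), mul_right_comm]

end Sum

variable {ι κ F G : Type*} [Fintype ι] [Fintype κ] [SeminormedAddCommGroup F]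
  [SeminormedAddCommGroup G]

/-- `T` is a contraction from the weighted space `ℓ²(w')` to the weighted space `ℓ²(w)`. -/
def IsWeightedContraction (T : (κ → F) →+ (ι → G)) (w' : κ → ℝ) (w : ι → ℝ) : Prop :=
  ∀ v, ∑ i, w i * ‖T v i‖ ^ 2 ≤ ∑ j, w' j * ‖v j‖ ^ 2

namespace IsWeightedContraction

variable {T : (κ → F) →+ (ι → G)} {x' y' : κ → ℝ} {x y : ι → ℝ}

lemma const_mul (h : IsWeightedContraction T y' y) {t : ℝ} (ht : 0 ≤ t) :
    IsWeightedContraction T (fun j ↦ t * y' j) (fun i ↦ t * y i) := by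
  intro v
  simp only [mul_assoc, ← Finset.mul_sum]
  exact mul_le_mul_of_nonneg_left (h v) ht

variable [NormedSpace ℝ F]

/- The target weights are a minimum over splittings of `T v`, the source weights a minimum over
splittings of `v`: splitting `v` optimally in each coordinate splits `T v` admissibly. -/
protected lemma parallelSum (h₀ : IsWeightedContraction T x' x) (h₁ : IsWeightedContraction T y' y)
    (hx' : 0 ≤ x') (hy' : 0 ≤ y') (hx : 0 ≤ x) (hy : 0 ≤ y) :
    IsWeightedContraction T (fun j ↦ parallelSum (x' j) (y' j))
      (fun i ↦ parallelSum (x i) (y i)) := by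
  intro v
  set θ : κ → ℝ := fun j ↦ y' j / (x' j + y' j)
  set a : κ → F := fun j ↦ θ j • v j
  set b : κ → F := fun j ↦ (1 - θ j) • v j
  have split : v = a + b := by
    ext j
    simp [a, b, ← add_smul]
  have optimal (j : κ) :
      x' j * ‖a j‖ ^ 2 + y' j * ‖b j‖ ^ 2 = parallelSum (x' j) (y' j) * ‖v j‖ ^ 2 := by
    simp only [a, b, norm_smul, mul_pow, Real.norm_eq_abs, sq_abs, ← mul_assoc, ← add_mul]
    rw [mul_sq_add_mul_sq_eq_parallelSum (hx' j) (hy' j)]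
  calc ∑ i, parallelSum (x i) (y i) * ‖T v i‖ ^ 2
      ≤ ∑ i, (x i * ‖T a i‖ ^ 2 + y i * ‖T b i‖ ^ 2) := by
        rw [split, map_add]
        exact Finset.sum_le_sum fun i _ ↦ parallelSum_mul_norm_add_sq_le (hx i) (hy i) _ _
    _ = ∑ i, x i * ‖T a i‖ ^ 2 + ∑ i, y i * ‖T b i‖ ^ 2 := Finset.sum_add_distrib
    _ ≤ ∑ j, x' j * ‖a j‖ ^ 2 + ∑ j, y' j * ‖b j‖ ^ 2 := add_le_add (h₀ a) (h₁ b)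
    _ = ∑ j, parallelSum (x' j) (y' j) * ‖v j‖ ^ 2 := by
        simp only [← Finset.sum_add_distrib, optimal]

lemma rpow_mul_rpow (h₀ : IsWeightedContraction T x' x) (h₁ : IsWeightedContraction T y' y)
    (hx' : 0 ≤ x') (hy' : 0 ≤ y') (hx : 0 ≤ x) (hy : 0 ≤ y) {s : ℝ} (hs : s ∈ Ioo 0 1) :
    IsWeightedContraction T (fun j ↦ x' j ^ s * y' j ^ (1 - s))
      (fun i ↦ x i ^ s * y i ^ (1 - s)) := by
  intro v
  refine le_of_mul_le_mul_right ?_ (Real.integral_rpowIntegrand₀₁_one_pos hs)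
  rw [← integral_rpow_mul_sum_parallelSum hs hx hy, ← integral_rpow_mul_sum_parallelSum hs hx' hy']
  refine setIntegral_mono_on (integrableOn_rpow_mul_sum_parallelSum hs hx hy _)
    (integrableOn_rpow_mul_sum_parallelSum hs hx' hy' _) measurableSet_Ioi fun t (ht : 0 < t) ↦ ?_
  refine mul_le_mul_of_nonneg_left ?_ (Real.rpow_nonneg ht.le _)
  exact h₀.parallelSum (h₁.const_mul ht.le) hx' (fun j ↦ mul_nonneg ht.le (hy' j)) hx
    (fun i ↦ mul_nonneg ht.le (hy i)) v

variable {τ : Type*} [Fintype τ] {w' : τ → κ → ℝ} {w : τ → ι → ℝ}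

lemma convex_setOf_prod_rpow (hw' : 0 ≤ w') (hw : 0 ≤ w) :
    Convex ℝ {p : τ → ℝ | 0 ≤ p ∧
      IsWeightedContraction T (fun j ↦ ∏ k, w' k j ^ p k) (fun i ↦ ∏ k, w k i ^ p k)} := by
  refine convex_iff_forall_pos.2 fun p ⟨hp, hTp⟩ q ⟨hq, hTq⟩ a b ha hb hab ↦ ⟨by positivity, ?_⟩
  have geometric {u : τ → ℝ} (hu : ∀ k, 0 ≤ u k) :
      (∏ k, u k ^ p k) ^ a * (∏ k, u k ^ q k) ^ (1 - a) = ∏ k, u k ^ (a • p + b • q) k := by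
    rw [← Real.finsetProd_rpow _ _ fun k _ ↦ Real.rpow_nonneg (hu k) _,
      ← Real.finsetProd_rpow _ _ fun k _ ↦ Real.rpow_nonneg (hu k) _, ← Finset.prod_mul_distrib]
    refine Finset.prod_congr rfl fun k _ ↦ ?_
    rw [← Real.rpow_mul (hu k), ← Real.rpow_mul (hu k), ← eq_sub_of_add_eq' hab, mul_comm (p k),
      mul_comm (q k), ← Real.rpow_add_of_nonneg (hu k) (mul_nonneg ha.le (hp k))
        (mul_nonneg hb.le (hq k))]
    rfl
  have interpolated := hTp.rpow_mul_rpow hTq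
    (fun j ↦ Finset.prod_nonneg fun k _ ↦ Real.rpow_nonneg (hw' k j) _)
    (fun j ↦ Finset.prod_nonneg fun k _ ↦ Real.rpow_nonneg (hw' k j) _)
    (fun i ↦ Finset.prod_nonneg fun k _ ↦ Real.rpow_nonneg (hw k i) _)
    (fun i ↦ Finset.prod_nonneg fun k _ ↦ Real.rpow_nonneg (hw k i) _)
    (s := a) ⟨ha, by linarith⟩
  simpa only [geometric (hw' · _), geometric (hw · _)] using interpolated

theorem prod_rpow (h : ∀ k, IsWeightedContraction T (w' k) (w k)) (hw' : 0 ≤ w') (hw : 0 ≤ w)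
    {p : τ → ℝ} (hp : p ∈ stdSimplex ℝ τ) :
    IsWeightedContraction T (fun j ↦ ∏ k, w' k j ^ p k) (fun i ↦ ∏ k, w k i ^ p k) := by
  classical
  have vertex (u : τ → ℝ) (k : τ) : ∏ l, u l ^ (Pi.single k 1 : τ → ℝ) l = u k := by
    rw [Finset.prod_eq_single k (fun l _ hl ↦ by simp [hl]) (by simp)]
    simp
  rw [← convexHull_rangle_single_eq_stdSimplex] at hp
  refine (convexHull_min ?_ (convex_setOf_prod_rpow hw' hw) hp).2
  rintro _ ⟨k, rfl⟩
  exact ⟨Pi.single_nonneg.2 zero_le_one, by simpa only [vertex (w' · _), vertex (w · _)] using h k⟩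

lemma rpow_mul_rpow_of_add_le_one (h₀ : IsWeightedContraction T x' x)
    (h₁ : IsWeightedContraction T y' y) {c : ℝ}
    (h₂ : IsWeightedContraction T (fun _ ↦ c) (fun _ ↦ 1)) (hx' : 0 ≤ x') (hy' : 0 ≤ y')
    (hx : 0 ≤ x) (hy : 0 ≤ y) (hc : 0 ≤ c) {s t : ℝ} (hs : 0 ≤ s) (ht : 0 ≤ t)
    (hst : s + t ≤ 1) :
    IsWeightedContraction T (fun j ↦ c ^ (1 - (s + t)) * (x' j ^ s * y' j ^ t))
      (fun i ↦ x i ^ s * y i ^ t) := by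
  have simplex : ![s, t, 1 - (s + t)] ∈ stdSimplex ℝ (Fin 3) :=
    ⟨by simp [Fin.forall_fin_succ, hs, ht, hst], by simp [Fin.sum_univ_three]⟩
  have interpolated := prod_rpow (T := T) (w' := ![x', y', fun _ ↦ c]) (w := ![x, y, fun _ ↦ 1])
    (by simp [Fin.forall_fin_succ, h₀, h₁, h₂])
    (by simpa [Pi.le_def, Fin.forall_fin_succ] using ⟨hx', hy', fun _ ↦ hc⟩)
    (by simpa [Pi.le_def, Fin.forall_fin_succ] using ⟨hx, hy⟩) simplex
  simpa [Fin.prod_univ_three, mul_comm] using interpolated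

end IsWeightedContraction

end WeightedInterpolation

section UnitaryCoordinates

variable {k l : Type*} [Fintype k] [Fintype l] [DecidableEq k] [DecidableEq l]

/-- The coordinates `⟨uᵢ, K vⱼ⟩` of a matrix `K` with respect to the orthonormal bases formed by the
columns `uᵢ` of `U` and `vⱼ` of `V`. For eigenvectors of `X` and `Y` they diagonalize `K ↦ X * K`
and `K ↦ K * Y` simultaneously. Only the additive structure is recorded, which is all that weighted
contractions refer to. -/
def unitaryCoords (U : unitaryGroup k ℂ) (V : unitaryGroup l ℂ) :
    Matrix k l ℂ ≃+ (k × l → ℂ) where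
  toFun K p := (star U.1 * K * V.1) p.1 p.2
  invFun v := U.1 * of (Function.curry v) * star V.1
  map_add' K L := by
    ext p
    simp only [Matrix.mul_add, Matrix.add_mul, Matrix.add_apply, Pi.add_apply]
  left_inv K := by
    calc U.1 * (star U.1 * K * V.1) * star V.1
        = (U.1 * star U.1) * K * (V.1 * star V.1) := by simp only [Matrix.mul_assoc]
      _ = K := by simp only [Unitary.mul_star_self_of_mem, SetLike.coe_mem, Matrix.one_mul,
          Matrix.mul_one]
  right_inv v := by
    have cancel : star U.1 * (U.1 * of (Function.curry v) * star V.1) * V.1 =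
        of (Function.curry v) := by
      calc star U.1 * (U.1 * of (Function.curry v) * star V.1) * V.1
          = (star U.1 * U.1) * of (Function.curry v) * (star V.1 * V.1) := by
            simp only [Matrix.mul_assoc]
        _ = of (Function.curry v) := by simp only [Unitary.star_mul_self_of_mem, SetLike.coe_mem,
            Matrix.one_mul, Matrix.mul_one]
    exact funext fun p ↦ congrFun (congrFun cancel p.1) p.2

lemma re_trace_conjTranspose_mul_diagonal_mul_diagonal (L : Matrix k l ℂ) (x : k → ℝ)
    (y : l → ℝ) :
    (Lᴴ * diagonal (fun i ↦ (x i : ℂ)) * L * diagonal (fun j ↦ (y j : ℂ))).trace.re =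
      ∑ p : k × l, x p.1 * y p.2 * ‖L p.1 p.2‖ ^ 2 := by
  rw [Fintype.sum_prod_type_right, Matrix.trace, Complex.re_sum]
  refine Finset.sum_congr rfl fun j _ ↦ ?_
  rw [diag_apply, mul_diagonal, mul_apply, Finset.sum_mul, Complex.re_sum]
  refine Finset.sum_congr rfl fun i _ ↦ ?_
  rw [mul_diagonal, conjTranspose_apply, ← Complex.normSq_eq_norm_sq]
  simp only [RCLike.star_def, Complex.mul_re, Complex.mul_im, Complex.conj_re, Complex.conj_im,
    Complex.ofReal_re, Complex.ofReal_im, Complex.normSq_apply]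
  ring

end UnitaryCoordinates

section Power

variable {a b : ℕ} {X : Matrix (Fin a) (Fin a) ℂ} {Y : Matrix (Fin b) (Fin b) ℂ}

lemma mpow_eq_mul_diagonal_mul (hX : X.IsHermitian) (p : ℝ) :
    mpow X p = (hX.eigenvectorUnitary : Matrix (Fin a) (Fin a) ℂ) *
      diagonal (fun i ↦ ((hX.eigenvalues i ^ p : ℝ) : ℂ)) *
      (hX.eigenvectorUnitary : Matrix (Fin a) (Fin a) ℂ)ᴴ :=
  dif_pos hX

lemma mpow_zero (hX : X.IsHermitian) : mpow X 0 = 1 := by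
  simp [mpow_eq_mul_diagonal_mul hX, ← star_eq_conjTranspose]

lemma mpow_one (hX : X.IsHermitian) : mpow X 1 = X := by
  conv_rhs => rw [hX.spectral_theorem]
  simp only [mpow_eq_mul_diagonal_mul hX, Real.rpow_one]
  rfl

lemma re_trace_mul_mpow_mul_mpow (hX : X.IsHermitian) (hY : Y.IsHermitian)
    (K : Matrix (Fin a) (Fin b) ℂ) (s t : ℝ) :
    (Kᴴ * mpow X s * K * mpow Y t).trace.re =
      ∑ p : Fin a × Fin b, hX.eigenvalues p.1 ^ s * hY.eigenvalues p.2 ^ t *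
        ‖unitaryCoords hX.eigenvectorUnitary hY.eigenvectorUnitary K p‖ ^ 2 := by
  refine Eq.trans ?_ (re_trace_conjTranspose_mul_diagonal_mul_diagonal
    (star hX.eigenvectorUnitary.1 * K * hY.eigenvectorUnitary.1)
    (hX.eigenvalues · ^ s) (hY.eigenvalues · ^ t))
  rw [mpow_eq_mul_diagonal_mul hX, mpow_eq_mul_diagonal_mul hY, ← Matrix.mul_assoc,
    Matrix.trace_mul_comm]
  simp only [conjTranspose_mul, star_eq_conjTranspose, conjTranspose_conjTranspose,
    Matrix.mul_assoc]

variable {a' b' : ℕ} {X' : Matrix (Fin a') (Fin a') ℂ} {Y' : Matrix (Fin b') (Fin b') ℂ}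

lemma isWeightedContraction_unitaryCoords_iff
    (Φ : Matrix (Fin a') (Fin b') ℂ →+ Matrix (Fin a) (Fin b) ℂ) (hX : X.IsHermitian)
    (hY : Y.IsHermitian) (hX' : X'.IsHermitian) (hY' : Y'.IsHermitian) (c s t : ℝ) :
    IsWeightedContraction
        ((unitaryCoords hX.eigenvectorUnitary hY.eigenvectorUnitary).addMonoidHomCongrRight
          ((unitaryCoords hX'.eigenvectorUnitary hY'.eigenvectorUnitary).addMonoidHomCongrLeft Φ))
        (fun p ↦ c * (hX'.eigenvalues p.1 ^ s * hY'.eigenvalues p.2 ^ t))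
        (fun p ↦ hX.eigenvalues p.1 ^ s * hY.eigenvalues p.2 ^ t) ↔
      ∀ K, ((Φ K)ᴴ * mpow X s * Φ K * mpow Y t).trace.re ≤
        c * (Kᴴ * mpow X' s * K * mpow Y' t).trace.re := by
  rw [IsWeightedContraction,
    (unitaryCoords hX'.eigenvectorUnitary hY'.eigenvectorUnitary).surjective.forall]
  refine forall_congr' fun K ↦ ?_
  rw [re_trace_mul_mpow_mul_mpow hX hY, re_trace_mul_mpow_mul_mpow hX' hY', Finset.mul_sum]
  simp [mul_assoc]

theorem re_trace_mul_mpow_mul_mpow_le (Φ : Matrix (Fin a') (Fin b') ℂ →+ Matrix (Fin a) (Fin b) ℂ)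
    (hX : X.PosSemidef) (hY : Y.PosSemidef) (hX' : X'.PosSemidef) (hY' : Y'.PosSemidef)
    {c : ℝ} (hc : 0 ≤ c)
    (hleft : ∀ K, ((Φ K)ᴴ * X * Φ K).trace.re ≤ (Kᴴ * X' * K).trace.re)
    (hright : ∀ K, ((Φ K)ᴴ * Φ K * Y).trace.re ≤ (Kᴴ * K * Y').trace.re)
    (hnorm : ∀ K, ((Φ K)ᴴ * Φ K).trace.re ≤ c * (Kᴴ * K).trace.re)
    {s t : ℝ} (hs : 0 ≤ s) (ht : 0 ≤ t) (hst : s + t ≤ 1) (K : Matrix (Fin a') (Fin b') ℂ) :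
    ((Φ K)ᴴ * mpow X s * Φ K * mpow Y t).trace.re ≤
      c ^ (1 - (s + t)) * (Kᴴ * mpow X' s * K * mpow Y' t).trace.re := by
  have dictionary := isWeightedContraction_unitaryCoords_iff Φ hX.1 hY.1 hX'.1 hY'.1
  have left := (dictionary 1 1 0).2 (by
    simpa only [mpow_one hX.1, mpow_zero hY.1, mpow_one hX'.1, mpow_zero hY'.1, mul_one, one_mul]
      using hleft)
  have right := (dictionary 1 0 1).2 (by
    simpa only [mpow_zero hX.1, mpow_one hY.1, mpow_zero hX'.1, mpow_one hY'.1, Matrix.mul_one,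
      one_mul]
      using hright)
  have norm := (dictionary c 0 0).2 (by
    simpa only [mpow_zero hX.1, mpow_zero hY.1, mpow_zero hX'.1, mpow_zero hY'.1, Matrix.mul_one]
      using hnorm)
  simp only [Real.rpow_one, Real.rpow_zero, one_mul, mul_one] at left right norm
  refine (dictionary _ s t).1 ?_ K
  exact left.rpow_mul_rpow_of_add_le_one right norm
    (fun p ↦ hX'.eigenvalues_nonneg p.1) (fun p ↦ hY'.eigenvalues_nonneg p.2)
    (fun p ↦ hX.eigenvalues_nonneg p.1) (fun p ↦ hY.eigenvalues_nonneg p.2) hc hs ht hst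

end Power

section SchwarzMap

open scoped MatrixOrder

lemma posSemidef_iff_forall_trace_mul_nonneg {ι : Type*} [Fintype ι] {A : Matrix ι ι ℂ} :
    A.PosSemidef ↔ ∀ P : Matrix ι ι ℂ, P.PosSemidef → 0 ≤ (A * P).trace := by
  classical
  refine ⟨fun hA P hP ↦ ?_, fun h ↦ ?_⟩
  · obtain ⟨C, rfl⟩ := CStarAlgebra.nonneg_iff_eq_star_mul_self.mp hP.nonneg
    rw [star_eq_conjTranspose, ← Matrix.mul_assoc, Matrix.trace_mul_comm, ← Matrix.mul_assoc]
    exact (hA.mul_mul_conjTranspose_same C).trace_nonneg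
  · rw [← isPositive_toEuclideanLin_iff, LinearMap.isPositive_iff_complex]
    intro v
    have quadratic : 0 ≤ inner ℂ (toEuclideanLin A v) v := by
      rw [EuclideanSpace.inner_eq_star_dotProduct, dotProduct_star, star_nonneg_iff]
      simpa only [toLpLin_apply, mul_vecMulVec, trace_vecMulVec] using
        h _ (posSemidef_vecMulVec_self_star v.ofLp)
    exact ⟨(Complex.eq_re_of_ofReal_le (r := 0) (by simpa using quadratic)).symm,
      (Complex.nonneg_iff.1 quadratic).1⟩

variable {a b : ℕ} {Φ : Matrix (Fin a) (Fin a) ℂ →ₗ[ℂ] Matrix (Fin b) (Fin b) ℂ}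
  {Ψ : Matrix (Fin b) (Fin b) ℂ →ₗ[ℂ] Matrix (Fin a) (Fin a) ℂ}

lemma IsPositiveMap.map_conjTranspose (hΦ : IsPositiveMap Φ) (A : Matrix (Fin a) (Fin a) ℂ) :
    Φ Aᴴ = (Φ A)ᴴ :=
  map_star (PositiveLinearMap.mk₀ Φ fun X hX ↦ (hΦ X hX.posSemidef).nonneg) A

lemma IsSchwarz.isPositiveMap (hΦ : IsSchwarz Φ) : IsPositiveMap Φ := by
  intro X hX
  obtain ⟨C, rfl⟩ := CStarAlgebra.nonneg_iff_eq_star_mul_self.mp hX.nonneg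
  simpa only [sub_add_cancel, star_eq_conjTranspose] using
    (hΦ C).add (posSemidef_conjTranspose_mul_self (Φ C))

lemma IsPositiveMap.adjoint (hΦ : IsPositiveMap Φ) (hadj : IsHSAdjoint Φ Ψ) : IsPositiveMap Ψ := by
  intro X hX
  rw [← posSemidef_conjTranspose_iff, posSemidef_iff_forall_trace_mul_nonneg]
  intro P hP
  rw [← hadj, hX.1]
  exact posSemidef_iff_forall_trace_mul_nonneg.1 hX _ (hΦ P hP)

lemma IsSchwarz.trace_conjTranspose_mul_self_mul_le (hΦ : IsSchwarz Φ) (hadj : IsHSAdjoint Φ Ψ)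
    {Y : Matrix (Fin b) (Fin b) ℂ} (hY : Y.PosSemidef) (K : Matrix (Fin a) (Fin a) ℂ) :
    ((Φ K)ᴴ * Φ K * Y).trace ≤ (Kᴴ * K * Ψ Y).trace := by
  have schwarz := posSemidef_iff_forall_trace_mul_nonneg.1 (hΦ K) Y hY
  have adjoint : (Φ (Kᴴ * K) * Y).trace = (Kᴴ * K * Ψ Y).trace := by
    rw [trace_mul_comm, trace_mul_comm _ (Ψ Y)]
    simpa only [hY.1.eq, (hΦ.isPositiveMap.adjoint hadj Y hY).1.eq] using hadj Y (Kᴴ * K)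
  rwa [sub_mul, trace_sub, adjoint, sub_nonneg] at schwarz

lemma IsSchwarz.trace_conjTranspose_mul_mul_le (hΦ : IsSchwarz Φ) (hadj : IsHSAdjoint Φ Ψ)
    {X : Matrix (Fin b) (Fin b) ℂ} (hX : X.PosSemidef) (K : Matrix (Fin a) (Fin a) ℂ) :
    ((Φ K)ᴴ * X * Φ K).trace ≤ (Kᴴ * Ψ X * K).trace := by
  simpa only [hΦ.isPositiveMap.map_conjTranspose, conjTranspose_conjTranspose,
    trace_mul_cycle _ X, trace_mul_cycle _ (Ψ X)] using
    hΦ.trace_conjTranspose_mul_self_mul_le hadj hX Kᴴ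

lemma IsSchwarz.trace_conjTranspose_mul_self_le (hΦ : IsSchwarz Φ) (hadj : IsHSAdjoint Φ Ψ)
    {c : ℝ} (hΨ : ((c : ℂ) • 1 - Ψ 1).PosSemidef) (K : Matrix (Fin a) (Fin a) ℂ) :
    ((Φ K)ᴴ * Φ K).trace ≤ c * (Kᴴ * K).trace := by
  have schwarz := hΦ.trace_conjTranspose_mul_self_mul_le hadj .one K
  have bound := posSemidef_iff_forall_trace_mul_nonneg.1 hΨ _ (posSemidef_conjTranspose_mul_self K)
  rw [sub_mul, trace_sub, sub_nonneg, smul_mul, trace_smul, one_mul, smul_eq_mul,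
    trace_mul_comm (Ψ 1)] at bound
  rw [mul_one] at schwarz
  exact schwarz.trans bound

end SchwarzMap

theorem stmt10_general {m n : ℕ} {s t : ℝ} (hs : 0 ≤ s) (ht : 0 ≤ t) (hst : s + t ≤ 1)
    {Φ : Matrix (Fin m) (Fin m) ℂ →ₗ[ℂ] Matrix (Fin n) (Fin n) ℂ}
    {Ψ : Matrix (Fin n) (Fin n) ℂ →ₗ[ℂ] Matrix (Fin m) (Fin m) ℂ}
    (hΦ : IsSchwarz Φ) (hadj : IsHSAdjoint Φ Ψ)
    {c : ℝ} (hc : 0 ≤ c) (hΨ : ((c : ℂ) • 1 - Ψ 1).PosSemidef)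
    {X Y : Matrix (Fin n) (Fin n) ℂ} (hX : X.PosSemidef) (hY : Y.PosSemidef)
    (K : Matrix (Fin m) (Fin m) ℂ) :
    ((Φ K)ᴴ * mpow X s * Φ K * mpow Y t).trace.re ≤
      c ^ (1 - (s + t)) * (Kᴴ * mpow (Ψ X) s * K * mpow (Ψ Y) t).trace.re := by
  have positive := hΦ.isPositiveMap.adjoint hadj
  refine re_trace_mul_mpow_mul_mpow_le Φ.toAddMonoidHom hX hY (positive X hX) (positive Y hY) hc
    (fun L ↦ ?_) (fun L ↦ ?_) (fun L ↦ ?_) hs ht hst K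
  · exact (Complex.le_def.1 (hΦ.trace_conjTranspose_mul_mul_le hadj hX L)).1
  · exact (Complex.le_def.1 (hΦ.trace_conjTranspose_mul_self_mul_le hadj hY L)).1
  · exact (Complex.le_def.1 (hΦ.trace_conjTranspose_mul_self_le hadj hΨ L)).1.trans_eq
      (Complex.re_ofReal_mul _ _)

theorem stmt10 {m n : ℕ} (hm : 0 < m) (s t : ℝ) (hs : 0 < s) (ht : 0 < t) (hst : s + t ≤ 1)
    (Φ : Matrix (Fin m) (Fin m) ℂ →ₗ[ℂ] Matrix (Fin n) (Fin n) ℂ)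
    (Ψ : Matrix (Fin n) (Fin n) ℂ →ₗ[ℂ] Matrix (Fin m) (Fin m) ℂ)
    (hΦ : IsSchwarz Φ) (hadj : IsHSAdjoint Φ Ψ)
    (hsemi : Ψ 1 = (((n : ℝ) / m : ℝ) : ℂ) • 1)
    (X Y : Matrix (Fin n) (Fin n) ℂ) (hX : X.PosSemidef) (hY : Y.PosSemidef)
    (K : Matrix (Fin m) (Fin m) ℂ) :
    ((Φ K)ᴴ * mpow X s * Φ K * mpow Y t).trace.re ≤
      ((n : ℝ) / m) ^ (1 - (s + t)) *
        (Kᴴ * mpow (Ψ X) s * K * mpow (Ψ Y) t).trace.re :=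
  stmt10_general hs.le ht.le hst hΦ hadj (by positivity) (by simpa [hsemi] using .zero) hX hY K
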